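/- arXiv:2312.17440 — 3 statements merged into one kernel-verified Lean document; each statement's English description precedes it below -/
import Mathlib

section
/- Let E ∈ ℝ^{N×N} be a symmetric positive definite matrix, e ∈ ℝ^N, λ ∈ ℝ^N and μ ∈ ℝ. Then the ellipsoid 𝓔(E, e) is contained in the closed half-space H⁻(λ, μ) if and only if sqrt(λᵀ E⁻¹ λ) + λᵀ e ≤ μ. -/
open Matrix

/-- An ellipsoid `𝓔(E, e)` is contained in the closed half-space `H⁻(λ, μ)` iff
`sqrt (λᵀ E⁻¹ λ) + λᵀ e ≤ μ`. -/
theorem stmt_2 (N : ℕ) (E : Matrix (Fin N) (Fin N) ℝ) (hE : E.PosDef)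
    (e lam : Fin N → ℝ) (μ : ℝ) :
    {s : Fin N → ℝ | (s - e) ⬝ᵥ E *ᵥ (s - e) ≤ 1} ⊆ {s : Fin N → ℝ | lam ⬝ᵥ s ≤ μ} ↔
      Real.sqrt (lam ⬝ᵥ E⁻¹ *ᵥ lam) + lam ⬝ᵥ e ≤ μ := by
  have hT : Eᵀ = E := by simpa using hE.isHermitian.eq
  have hnn : ∀ x : Fin N → ℝ, 0 ≤ x ⬝ᵥ E *ᵥ x := fun x => by
    simpa using hE.posSemidef.dotProduct_mulVec_nonneg x
  obtain ⟨w, hw⟩ : ∃ w, w = E⁻¹ *ᵥ lam := ⟨_, rfl⟩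
  have hEw : E *ᵥ w = lam := by
    rw [hw, mulVec_mulVec, mul_nonsing_inv _ ((isUnit_iff_isUnit_det E).1 hE.isUnit), one_mulVec]
  rw [← hw]
  have hwl : w ⬝ᵥ lam = lam ⬝ᵥ w := dotProduct_comm _ _
  have hq : 0 ≤ lam ⬝ᵥ w := by
    have := hnn w
    rwa [hEw, hwl] at this
  obtain ⟨r, hr⟩ : ∃ r, r = Real.sqrt (lam ⬝ᵥ w) := ⟨_, rfl⟩
  have hr0 : 0 ≤ r := hr ▸ Real.sqrt_nonneg _
  have hrq : lam ⬝ᵥ w = r * r := by rw [hr, Real.mul_self_sqrt hq]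
  rw [← hr]
  constructor
  · intro h
    have h1 := @h (e + r⁻¹ • w) (by
      simp only [Set.mem_setOf_eq, add_sub_cancel_left, mulVec_smul, hEw, smul_dotProduct,
        dotProduct_smul, hwl, hrq, smul_eq_mul]
      rcases hr0.eq_or_lt with h0 | h0
      · simp [← h0]
      · apply le_of_eq
        field_simp)
    simp only [Set.mem_setOf_eq, dotProduct_add, dotProduct_smul, hrq, smul_eq_mul] at h1
    rcases hr0.eq_or_lt with h0 | h0
    · simp only [← h0] at h1 ⊢
      linarith
    · rw [inv_mul_cancel_left₀ h0.ne'] at h1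
      linarith
  · intro h s hs
    simp only [Set.mem_setOf_eq] at hs ⊢
    obtain ⟨x, hx⟩ : ∃ x, x = s - e := ⟨_, rfl⟩
    have hse : s = e + x := by rw [hx]; abel
    rw [← hx] at hs
    have hwE : w ⬝ᵥ E *ᵥ x = lam ⬝ᵥ x := by
      rw [dotProduct_mulVec, ← mulVec_transpose, hT, hEw]
    have key : ∀ t c : ℝ, 0 ≤ t * t * (x ⬝ᵥ E *ᵥ x) - 2 * t * c * (lam ⬝ᵥ x) + c * c * (r * r) := by
      intro t c
      have h2 := hnn (t • x - c • w)
      simp only [mulVec_sub, mulVec_smul, hEw, sub_dotProduct, dotProduct_sub, smul_dotProduct,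
        dotProduct_smul, hwE, hwl, hrq, smul_eq_mul, dotProduct_comm x lam] at h2
      linarith
    rw [hse, dotProduct_add]
    have hb : lam ⬝ᵥ x ≤ r := by
      rcases hr0.eq_or_lt with h0 | h0
      · by_contra hc
        rw [← h0] at hc
        push Not at hc
        have := key 1 (lam ⬝ᵥ x)⁻¹
        rw [← h0] at this
        have h3 : 2 * 1 * (lam ⬝ᵥ x)⁻¹ * (lam ⬝ᵥ x) = 2 := by field_simp
        rw [h3] at this
        linarith
      · have := key r 1
        have h3 : r * (lam ⬝ᵥ x) ≤ r * r := by nlinarith [mul_pos h0 h0]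
        exact le_of_mul_le_mul_left h3 h0
    linarith
end

section
/- Let E1, E2 ∈ ℝ^{N×N} be symmetric positive definite matrices and e1, e2 ∈ ℝ^N. Then the ellipsoids 𝓔(E1, e1) and 𝓔(E2, e2) are disjoint if and only if there exist λ ∈ ℝ^N and μ ∈ ℝ such that sqrt(λᵀ E1⁻¹ λ) + λᵀ e1 < μ and λᵀ e2 − sqrt(λᵀ E2⁻¹ λ) > μ (these conditions force λ ≠ 0). -/
open Matrix

lemma ell_inv_mul {N : ℕ} {E : Matrix (Fin N) (Fin N) ℝ} (hE : E.PosDef) (lam : Fin N → ℝ) :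
    E *ᵥ (E⁻¹ *ᵥ lam) = lam := by
  have h : IsUnit E.det := (Matrix.isUnit_iff_isUnit_det E).1 hE.isUnit
  rw [Matrix.mulVec_mulVec, Matrix.mul_nonsing_inv E h, Matrix.one_mulVec]

lemma ell_symm {N : ℕ} {E : Matrix (Fin N) (Fin N) ℝ} (hE : E.PosDef) (x y : Fin N → ℝ) :
    x ⬝ᵥ E *ᵥ y = y ⬝ᵥ E *ᵥ x := by
  have h : Eᵀ = E := by
    have := hE.isHermitian
    rwa [Matrix.IsHermitian, Matrix.conjTranspose_eq_transpose_of_trivial] at this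
  rw [Matrix.dotProduct_mulVec, ← Matrix.mulVec_transpose, h, dotProduct_comm]

lemma ell_nonneg {N : ℕ} {E : Matrix (Fin N) (Fin N) ℝ} (hE : E.PosDef) (x : Fin N → ℝ) :
    0 ≤ x ⬝ᵥ E *ᵥ x := by
  simpa using hE.posSemidef.dotProduct_mulVec_nonneg x

lemma ell_cs {N : ℕ} {E : Matrix (Fin N) (Fin N) ℝ} (hE : E.PosDef) (lam x : Fin N → ℝ) :
    (lam ⬝ᵥ x) ^ 2 ≤ (lam ⬝ᵥ E⁻¹ *ᵥ lam) * (x ⬝ᵥ E *ᵥ x) := by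
  have key : ∀ t : ℝ, 0 ≤ (lam ⬝ᵥ E⁻¹ *ᵥ lam) * (t * t) + (-2 * (lam ⬝ᵥ x)) * t
      + (x ⬝ᵥ E *ᵥ x) := by
    intro t
    have h := ell_nonneg hE (x - t • (E⁻¹ *ᵥ lam))
    have h1 := ell_symm hE (E⁻¹ *ᵥ lam) x
    simp only [Matrix.mulVec_sub, Matrix.mulVec_smul, sub_dotProduct, dotProduct_sub,
      smul_dotProduct, dotProduct_smul, h1, ell_inv_mul hE, smul_eq_mul] at h
    rw [dotProduct_comm x lam, dotProduct_comm (E⁻¹ *ᵥ lam) lam] at h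
    linarith
  have := discrim_le_zero key
  unfold discrim at this
  nlinarith

lemma ell_le {N : ℕ} {E : Matrix (Fin N) (Fin N) ℝ} (hE : E.PosDef) (lam x : Fin N → ℝ)
    (hx : x ⬝ᵥ E *ᵥ x ≤ 1) : |lam ⬝ᵥ x| ≤ √(lam ⬝ᵥ E⁻¹ *ᵥ lam) := by
  apply Real.abs_le_sqrt
  have h := ell_cs hE lam x
  have := ell_nonneg hE.inv lam
  nlinarith

lemma ell_iff {N : ℕ} {E : Matrix (Fin N) (Fin N) ℝ} (hE : E.PosDef) (x : Fin N → ℝ) :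
    x ⬝ᵥ E *ᵥ x ≤ 1 ↔ ∀ lam, lam ⬝ᵥ x ≤ √(lam ⬝ᵥ E⁻¹ *ᵥ lam) := by
  refine ⟨fun h lam => (le_abs_self _).trans (ell_le hE lam x h), fun h => ?_⟩
  have h1 := h (E *ᵥ x)
  have hu : IsUnit E.det := (Matrix.isUnit_iff_isUnit_det E).1 hE.isUnit
  rw [Matrix.mulVec_mulVec, Matrix.nonsing_inv_mul E hu, Matrix.one_mulVec,
    dotProduct_comm] at h1
  have h0 := ell_nonneg hE x
  generalize x ⬝ᵥ E *ᵥ x = q at *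
  by_contra hq
  push Not at hq
  have := Real.sq_sqrt h0
  nlinarith

lemma ell_attain {N : ℕ} {E : Matrix (Fin N) (Fin N) ℝ} (hE : E.PosDef) (lam : Fin N → ℝ) :
    ∃ x, x ⬝ᵥ E *ᵥ x ≤ 1 ∧ lam ⬝ᵥ x = √(lam ⬝ᵥ E⁻¹ *ᵥ lam) := by
  have h0 := ell_nonneg hE.inv lam
  refine ⟨(√(lam ⬝ᵥ E⁻¹ *ᵥ lam))⁻¹ • (E⁻¹ *ᵥ lam), ?_, ?_⟩
  · simp only [Matrix.mulVec_smul, ell_inv_mul hE, smul_dotProduct, dotProduct_smul, smul_eq_mul]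
    rw [dotProduct_comm (E⁻¹ *ᵥ lam) lam, ← mul_assoc, ← mul_inv, Real.mul_self_sqrt h0]
    exact inv_mul_le_one
  · rw [dotProduct_smul, smul_eq_mul, mul_comm, ← div_eq_mul_inv, Real.div_sqrt]

lemma ell_set {N : ℕ} {E : Matrix (Fin N) (Fin N) ℝ} (hE : E.PosDef) (e : Fin N → ℝ) :
    {s : Fin N → ℝ | (s - e) ⬝ᵥ E *ᵥ (s - e) ≤ 1} =
      ⋂ lam : Fin N → ℝ, {s | lam ⬝ᵥ s ≤ √(lam ⬝ᵥ E⁻¹ *ᵥ lam) + lam ⬝ᵥ e} := by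
  ext s
  simp only [Set.mem_ofPred_eq, Set.mem_iInter, ell_iff hE, dotProduct_sub, sub_le_iff_le_add]

lemma ell_convex {N : ℕ} {E : Matrix (Fin N) (Fin N) ℝ} (hE : E.PosDef) (e : Fin N → ℝ) :
    Convex ℝ {s : Fin N → ℝ | (s - e) ⬝ᵥ E *ᵥ (s - e) ≤ 1} := by
  rw [ell_set hE]
  refine convex_iInter fun lam => convex_halfSpace_le ⟨?_, ?_⟩ _
  · intro x y; exact dotProduct_add _ _ _
  · intro c x; exact dotProduct_smul _ _ _

lemma ell_closed {N : ℕ} {E : Matrix (Fin N) (Fin N) ℝ} (hE : E.PosDef) (e : Fin N → ℝ) :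
    IsClosed {s : Fin N → ℝ | (s - e) ⬝ᵥ E *ᵥ (s - e) ≤ 1} := by
  rw [ell_set hE]
  refine isClosed_iInter fun lam => isClosed_le ?_ continuous_const
  exact Continuous.dotProduct continuous_const continuous_id

lemma ell_compact {N : ℕ} {E : Matrix (Fin N) (Fin N) ℝ} (hE : E.PosDef) (e : Fin N → ℝ) :
    IsCompact {s : Fin N → ℝ | (s - e) ⬝ᵥ E *ᵥ (s - e) ≤ 1} := by
  let r : Fin N → ℝ := fun i => √((Pi.single i 1 : Fin N → ℝ) ⬝ᵥ E⁻¹ *ᵥ (Pi.single i 1))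
  refine IsCompact.of_isClosed_subset (isCompact_Icc (a := e - r) (b := e + r))
    (ell_closed hE e) ?_
  intro s hs
  have h : ∀ i, |s i - e i| ≤ r i := by
    intro i
    have := ell_le hE (Pi.single i 1) (s - e) hs
    rwa [single_one_dotProduct] at this
  constructor
  · intro i
    have := (abs_le.1 (h i)).1
    simp only [Pi.sub_apply]; linarith
  · intro i
    have := (abs_le.1 (h i)).2
    simp only [Pi.add_apply]; linarith

/-- Two ellipsoids `𝓔(E1, e1)` and `𝓔(E2, e2)` are disjoint iff there exist `λ ∈ ℝ^N`
and `μ ∈ ℝ` with `sqrt (λᵀ E1⁻¹ λ) + λᵀ e1 < μ` and `λᵀ e2 - sqrt (λᵀ E2⁻¹ λ) > μ`. -/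
theorem stmt_5 (N : ℕ) (E1 E2 : Matrix (Fin N) (Fin N) ℝ)
    (hE1 : E1.PosDef) (hE2 : E2.PosDef) (e1 e2 : Fin N → ℝ) :
    {s : Fin N → ℝ | (s - e1) ⬝ᵥ E1 *ᵥ (s - e1) ≤ 1} ∩
        {s : Fin N → ℝ | (s - e2) ⬝ᵥ E2 *ᵥ (s - e2) ≤ 1} = ∅ ↔
      ∃ (lam : Fin N → ℝ) (μ : ℝ),
        Real.sqrt (lam ⬝ᵥ E1⁻¹ *ᵥ lam) + lam ⬝ᵥ e1 < μ ∧
        μ < lam ⬝ᵥ e2 - Real.sqrt (lam ⬝ᵥ E2⁻¹ *ᵥ lam) := by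
  constructor
  · intro h
    obtain ⟨f, u, v, h1, huv, h2⟩ := geometric_hahn_banach_compact_closed
      (ell_convex hE1 e1) (ell_compact hE1 e1) (ell_convex hE2 e2) (ell_closed hE2 e2)
      (Set.disjoint_iff_inter_eq_empty.2 h)
    let lam : Fin N → ℝ := fun i => f (Pi.single i 1)
    have hf : ∀ x, f x = lam ⬝ᵥ x := by
      intro x
      have := LinearMap.pi_apply_eq_sum_univ (f : (Fin N → ℝ) →ₗ[ℝ] ℝ) x
      simp only [ContinuousLinearMap.coe_coe] at this
      rw [this]
      simp only [dotProduct, lam, smul_eq_mul]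
      refine Finset.sum_congr rfl fun i _ => ?_
      rw [mul_comm]
      congr 2
      ext j
      simp [Pi.single_apply, eq_comm]
    obtain ⟨x, hx, hx'⟩ := ell_attain hE1 lam
    obtain ⟨y, hy, hy'⟩ := ell_attain hE2 lam
    have a := h1 (x + e1) (by simpa using hx)
    have b := h2 (-y + e2) (by simpa [Matrix.mulVec_neg] using hy)
    rw [hf, dotProduct_add, hx'] at a
    rw [hf, dotProduct_add, dotProduct_neg, hy'] at b
    exact ⟨lam, u, a, by linarith⟩
  · rintro ⟨lam, μ, h1, h2⟩
    rw [Set.eq_empty_iff_forall_notMem]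
    rintro s ⟨hs1, hs2⟩
    have a := (abs_le.1 (ell_le hE1 lam _ hs1)).2
    have b := (abs_le.1 (ell_le hE2 lam _ hs2)).1
    rw [dotProduct_sub] at a b
    linarith
end

section
/- (S-procedure / S-lemma) Let F1, F2 ∈ ℝ^{N×N} be symmetric matrices, g1, g2 ∈ ℝ^N, and h1, h2 ∈ ℝ. Suppose there exists x̄ ∈ ℝ^N with x̄ᵀ F1 x̄ + 2 g1ᵀ x̄ + h1 < 0. Then the implication (for all x ∈ ℝ^N, xᵀ F1 x + 2 g1ᵀ x + h1 ≤ 0 implies xᵀ F2 x + 2 g2ᵀ x + h2 ≤ 0) holds if and only if there exists λ ≥ 0 such that the (N+1)×(N+1) block matrix λ·[[F1, g1], [g1ᵀ, h1]] − [[F2, g2], [g2ᵀ, h2]] is positive semidefinite. -/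
open Matrix

/-- The `(N+1) × (N+1)` symmetric block matrix `[[F, g], [gᵀ, h]]`. -/
def quadBlock (N : ℕ) (F : Matrix (Fin N) (Fin N) ℝ) (g : Fin N → ℝ) (h : ℝ) :
    Matrix (Fin N ⊕ Unit) (Fin N ⊕ Unit) ℝ :=
  Matrix.fromBlocks F (Matrix.of fun i _ => g i) (Matrix.of fun _ j => g j)
    (Matrix.of fun _ _ => h)

lemma scalar_key (a1 b1 c1 a2 b2 c2 : ℝ) (ha : 0 < a1) (hc : c1 < 0)
    (H : ∀ s : ℝ, s ^ 2 * a1 + s * b1 + c1 ≤ 0 → s ^ 2 * a2 + s * b2 + c2 ≤ 0) :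
    c2 * a1 ≤ c1 * a2 := by
  have hac : a1 * c1 < 0 := mul_neg_of_pos_of_neg ha hc
  have hD : 0 ≤ b1 ^ 2 - 4 * a1 * c1 := by nlinarith [sq_nonneg b1]
  obtain ⟨d, hd0, hd⟩ : ∃ d : ℝ, 0 ≤ d ∧ d ^ 2 = b1 ^ 2 - 4 * a1 * c1 :=
    ⟨_, Real.sqrt_nonneg _, Real.sq_sqrt hD⟩
  have hlt : |b1| < d := by
    apply abs_lt_of_sq_lt_sq _ hd0
    nlinarith
  obtain ⟨hl, hr⟩ := abs_lt.mp hlt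
  have hdpos : 0 < d := lt_of_le_of_lt (abs_nonneg _) hlt
  have e1 := H ((-b1 + d) / (2 * a1)) (by
    apply le_of_eq; field_simp; nlinarith)
  have e2 := H ((-b1 - d) / (2 * a1)) (by
    apply le_of_eq; field_simp; nlinarith)
  have f1 : (-b1 + d) ^ 2 * a2 + (-b1 + d) * (2 * a1) * b2 + (2 * a1) ^ 2 * c2 ≤ 0 := by
    have h := mul_nonpos_of_nonneg_of_nonpos (sq_nonneg (2 * a1)) e1
    field_simp at h
    nlinarith
  have f2 : (-b1 - d) ^ 2 * a2 + (-b1 - d) * (2 * a1) * b2 + (2 * a1) ^ 2 * c2 ≤ 0 := by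
    have h := mul_nonpos_of_nonneg_of_nonpos (sq_nonneg (2 * a1)) e2
    field_simp at h
    nlinarith
  have g1 := mul_nonpos_of_nonneg_of_nonpos (show 0 ≤ b1 + d by linarith) f1
  have g2 := mul_nonpos_of_nonneg_of_nonpos (show 0 ≤ -b1 + d by linarith) f2
  have key : 8 * d * a1 * (c2 * a1 - c1 * a2) ≤ 0 := by
    have : 8 * d * a1 * (c2 * a1 - c1 * a2) =
      (b1 + d) * ((-b1 + d) ^ 2 * a2 + (-b1 + d) * (2 * a1) * b2 + (2 * a1) ^ 2 * c2) +
      (-b1 + d) * ((-b1 - d) ^ 2 * a2 + (-b1 - d) * (2 * a1) * b2 + (2 * a1) ^ 2 * c2) := by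
      linear_combination (-2 * d * a2) * hd
    linarith
  have hp : 0 < 8 * d * a1 := by positivity
  nlinarith [pos_of_mul_pos_left hp ha.le, nonpos_of_mul_nonpos_right key hp]

lemma quad_expand {ι : Type*} [Fintype ι] (M : Matrix ι ι ℝ) (u v : ι → ℝ) (s : ℝ) :
    (u + s • v) ⬝ᵥ M *ᵥ (u + s • v) =
      s ^ 2 * (v ⬝ᵥ M *ᵥ v) + s * (u ⬝ᵥ M *ᵥ v + v ⬝ᵥ M *ᵥ u) + u ⬝ᵥ M *ᵥ u := by
  simp only [mulVec_add, mulVec_smul, add_dotProduct, dotProduct_add, smul_dotProduct,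
    dotProduct_smul, smul_eq_mul]
  ring

lemma hom_slemma {ι : Type*} [Fintype ι] (A B : Matrix ι ι ℝ)
    (hs : ∃ z : ι → ℝ, z ⬝ᵥ A *ᵥ z < 0)
    (H : ∀ z : ι → ℝ, z ⬝ᵥ A *ᵥ z ≤ 0 → z ⬝ᵥ B *ᵥ z ≤ 0) :
    ∃ l : ℝ, 0 ≤ l ∧ ∀ z : ι → ℝ, z ⬝ᵥ B *ᵥ z ≤ l * (z ⬝ᵥ A *ᵥ z) := by
  have key : ∀ u v : ι → ℝ, u ⬝ᵥ A *ᵥ u < 0 → 0 < v ⬝ᵥ A *ᵥ v →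
      (v ⬝ᵥ B *ᵥ v) / (v ⬝ᵥ A *ᵥ v) ≤ (u ⬝ᵥ B *ᵥ u) / (u ⬝ᵥ A *ᵥ u) := by
    intro u v hu hv
    have := scalar_key _ (u ⬝ᵥ A *ᵥ v + v ⬝ᵥ A *ᵥ u) _ (v ⬝ᵥ B *ᵥ v)
      (u ⬝ᵥ B *ᵥ v + v ⬝ᵥ B *ᵥ u) (u ⬝ᵥ B *ᵥ u) hv hu (by
        intro s hs
        rw [← quad_expand] at hs ⊢
        exact H _ hs)
    rw [div_le_iff₀ hv, div_mul_eq_mul_div, le_div_iff_of_neg hu]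
    linarith
  let S : Set ℝ := {r | ∃ u : ι → ℝ, u ⬝ᵥ A *ᵥ u < 0 ∧ r = (u ⬝ᵥ B *ᵥ u) / (u ⬝ᵥ A *ᵥ u)}
  have hS : S.Nonempty := by
    obtain ⟨z, hz⟩ := hs
    exact ⟨_, z, hz, rfl⟩
  have hS0 : ∀ r ∈ S, 0 ≤ r := by
    rintro r ⟨u, hu, rfl⟩
    exact div_nonneg_of_nonpos (H u hu.le) hu.le
  have hB : BddBelow S := ⟨0, hS0⟩
  refine ⟨sInf S, le_csInf hS hS0, fun z => ?_⟩
  rcases lt_trichotomy (z ⬝ᵥ A *ᵥ z) 0 with hz | hz | hz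
  · have := csInf_le hB ⟨z, hz, rfl⟩
    rwa [le_div_iff_of_neg hz] at this
  · rw [hz, mul_zero]; exact H z hz.le
  · rw [← div_le_iff₀ hz]
    apply le_csInf hS
    rintro r ⟨u, hu, rfl⟩
    exact key u z hu hz

lemma quadBlock_eval (N : ℕ) (F : Matrix (Fin N) (Fin N) ℝ) (g : Fin N → ℝ) (h : ℝ)
    (z : Fin N ⊕ Unit → ℝ) :
    z ⬝ᵥ quadBlock N F g h *ᵥ z =
      (fun i => z (Sum.inl i)) ⬝ᵥ F *ᵥ (fun i => z (Sum.inl i))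
        + 2 * z (Sum.inr ()) * (g ⬝ᵥ fun i => z (Sum.inl i)) + h * z (Sum.inr ()) ^ 2 := by
  simp only [quadBlock, dotProduct, mulVec, Fintype.sum_sum_type, fromBlocks_apply₁₁,
    fromBlocks_apply₁₂, fromBlocks_apply₂₁, fromBlocks_apply₂₂, of_apply, Finset.univ_unique,
    Finset.sum_singleton, mul_add, Finset.sum_add_distrib, PUnit.default_eq_unit]
  have : ∑ x, z (Sum.inl x) * (g x * z (Sum.inr ())) =
      z (Sum.inr ()) * ∑ x, g x * z (Sum.inl x) := by
    rw [Finset.mul_sum]; exact Finset.sum_congr rfl fun _ _ => by ring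
  rw [this]; ring

lemma quadBlock_symm (N : ℕ) (F : Matrix (Fin N) (Fin N) ℝ) (hF : F.IsSymm) (g : Fin N → ℝ)
    (h : ℝ) : (quadBlock N F g h).IsHermitian := by
  ext i j
  rcases i with i | i <;> rcases j with j | j <;> simp [quadBlock, hF.apply]

lemma lead_nonpos (a b c : ℝ) (H : ∀ s : ℝ, 0 ≤ s → s ^ 2 * a + s * b + c ≤ 0) : a ≤ 0 := by
  by_contra! ha
  have h0 : 0 ≤ (|b| + |c|) / a + 1 := by positivity
  have h := H _ h0
  obtain ⟨s, hs⟩ : ∃ s, s = (|b| + |c|) / a + 1 := ⟨_, rfl⟩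
  rw [← hs] at h h0
  have hsa : s * a = |b| + |c| + a := by rw [hs]; field_simp
  have h1 : 1 ≤ s := by rw [hs]; have : 0 ≤ (|b| + |c|) / a := by positivity
                        linarith
  have e : s ^ 2 * a = s * (|b| + |c| + a) := by rw [← hsa]; ring
  nlinarith [neg_abs_le b, neg_abs_le c, abs_nonneg c, mul_nonneg h0 (abs_nonneg c),
    mul_le_mul_of_nonneg_left (neg_abs_le b) h0, mul_le_mul_of_nonneg_right h1 (abs_nonneg c)]

/-- S-procedure (S-lemma): under strict feasibility of the first quadratic inequality,
the implication between the two quadratic inequalities holds iff there exists `λ ≥ 0`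
such that `λ·[[F1, g1], [g1ᵀ, h1]] − [[F2, g2], [g2ᵀ, h2]]` is positive semidefinite. -/
theorem stmt_7 (N : ℕ) (F1 F2 : Matrix (Fin N) (Fin N) ℝ)
    (hF1 : F1.IsSymm) (hF2 : F2.IsSymm)
    (g1 g2 : Fin N → ℝ) (h1 h2 : ℝ)
    (hslater : ∃ x : Fin N → ℝ, x ⬝ᵥ F1 *ᵥ x + 2 * (g1 ⬝ᵥ x) + h1 < 0) :
    (∀ x : Fin N → ℝ,
        x ⬝ᵥ F1 *ᵥ x + 2 * (g1 ⬝ᵥ x) + h1 ≤ 0 →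
        x ⬝ᵥ F2 *ᵥ x + 2 * (g2 ⬝ᵥ x) + h2 ≤ 0) ↔
      ∃ lam : ℝ, 0 ≤ lam ∧
        (lam • quadBlock N F1 g1 h1 - quadBlock N F2 g2 h2).PosSemidef := by
  constructor
  · intro H
    obtain ⟨x0, hx0⟩ := hslater
    obtain ⟨l, hl, hh⟩ := hom_slemma (quadBlock N F1 g1 h1) (quadBlock N F2 g2 h2)
      ⟨Sum.elim x0 (fun _ => 1), by
        rw [quadBlock_eval]; simp only [Sum.elim_inl, Sum.elim_inr]; linarith⟩ (by
        intro z hz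
        rw [quadBlock_eval] at hz ⊢
        generalize (fun i => z (Sum.inl i)) = x at hz ⊢
        generalize z (Sum.inr ()) = t at hz ⊢
        by_cases ht : t = 0
        · subst ht
          simp only [mul_zero, zero_mul, add_zero, ne_eq, OfNat.ofNat_ne_zero,
            not_false_eq_true, zero_pow] at hz ⊢
          have main : ∀ y : Fin N → ℝ, y ⬝ᵥ F1 *ᵥ y ≤ 0 →
              (x0 ⬝ᵥ F1 *ᵥ y + y ⬝ᵥ F1 *ᵥ x0) + 2 * (g1 ⬝ᵥ y) ≤ 0 →
              y ⬝ᵥ F2 *ᵥ y ≤ 0 := by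
            intro y hy hb
            apply lead_nonpos _ ((x0 ⬝ᵥ F2 *ᵥ y + y ⬝ᵥ F2 *ᵥ x0) + 2 * (g2 ⬝ᵥ y))
              (x0 ⬝ᵥ F2 *ᵥ x0 + 2 * (g2 ⬝ᵥ x0) + h2)
            intro s hs
            have := H (x0 + s • y) (by
              rw [quad_expand, dotProduct_add, dotProduct_smul, smul_eq_mul]
              nlinarith [mul_nonpos_of_nonneg_of_nonpos hs hb,
                mul_nonpos_of_nonneg_of_nonpos (sq_nonneg s) hy])
            rw [quad_expand, dotProduct_add, dotProduct_smul, smul_eq_mul] at this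
            linarith
          rcases le_total ((x0 ⬝ᵥ F1 *ᵥ x + x ⬝ᵥ F1 *ᵥ x0) + 2 * (g1 ⬝ᵥ x)) 0 with hb | hb
          · exact main x hz hb
          · have := main (-x) (by simpa [mulVec_neg] using hz) (by
              simp only [mulVec_neg, dotProduct_neg, neg_dotProduct]; linarith)
            simpa [mulVec_neg] using this
        · have sc : ∀ (F : Matrix (Fin N) (Fin N) ℝ) (g : Fin N → ℝ) (h : ℝ),
              x ⬝ᵥ F *ᵥ x + 2 * t * (g ⬝ᵥ x) + h * t ^ 2 =
              t ^ 2 * ((t⁻¹ • x) ⬝ᵥ F *ᵥ (t⁻¹ • x) + 2 * (g ⬝ᵥ (t⁻¹ • x)) + h) := by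
            intro F g h
            simp only [mulVec_smul, smul_dotProduct, dotProduct_smul, smul_eq_mul]
            field_simp
          have ht2 : 0 < t ^ 2 := by positivity
          rw [sc] at hz ⊢
          exact mul_nonpos_of_nonneg_of_nonpos ht2.le
            (H _ (nonpos_of_mul_nonpos_right hz ht2)))
    refine ⟨l, hl, PosSemidef.of_dotProduct_mulVec_nonneg ?_ ?_⟩
    · have a1 := quadBlock_symm N F1 hF1 g1 h1
      have a2 := quadBlock_symm N F2 hF2 g2 h2
      unfold Matrix.IsHermitian at *
      rw [conjTranspose_sub, conjTranspose_smul, a1, a2]; simp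
    · intro z
      have := hh z
      simp only [star_trivial, sub_mulVec, smul_mulVec, dotProduct_sub, dotProduct_smul,
        smul_eq_mul]
      linarith
  · rintro ⟨l, hl, hP⟩ x hx
    have := hP.dotProduct_mulVec_nonneg (Sum.elim x (fun _ => 1))
    simp only [star_trivial, sub_mulVec, smul_mulVec, dotProduct_sub, dotProduct_smul,
      smul_eq_mul, quadBlock_eval, Sum.elim_inl, Sum.elim_inr] at this
    have h3 := mul_nonpos_of_nonneg_of_nonpos hl hx
    linarith
end
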